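/- The set L(n) of all A ∈ 𝓑(n) for which the closed Euclidean unit ball 𝔹ⁿ is the minimal-volume ellipsoid containing A (equivalently: A ⊆ 𝔹ⁿ and |det g| ≥ 1 for every g ∈ GL(n,ℝ) with A ⊆ g𝔹ⁿ) is a compact subset of 𝓑(n) with respect to the Hausdorff metric. -/

import Mathlib

open scoped Pointwise
open TopologicalSpace

noncomputable section

/-- `ℝⁿ` with the Euclidean metric. -/
abbrev Euc (n : ℕ) := EuclideanSpace ℝ (Fin n)

/-- `𝓑(n)`: the compact convex bodies of `ℝⁿ` symmetric about the origin, viewed inside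
the hyperspace of nonempty compact subsets of `ℝⁿ` carrying the Hausdorff metric. -/
def BodySet (n : ℕ) : Set (NonemptyCompacts (Euc n)) :=
  {K | Convex ℝ (K : Set (Euc n)) ∧ (interior (K : Set (Euc n))).Nonempty ∧
       (K : Set (Euc n)) = -(K : Set (Euc n))}

/-- An element of `𝓑(n)`, with the (Hausdorff-metric) subspace topology. -/
abbrev Body (n : ℕ) := ↥(BodySet n)

/-- The underlying subset of `ℝⁿ` of a body `A ∈ 𝓑(n)`. -/
def Body.toSet {n : ℕ} (A : Body n) : Set (Euc n) :=
  ((A : NonemptyCompacts (Euc n)) : Set (Euc n))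

/-- The image `gA` of a subset `A ⊆ ℝⁿ` under the linear map determined by the matrix
`g`; in particular `g𝔹ⁿ` is the ellipsoid associated to `g ∈ GL(n,ℝ)`. -/
def matImage (n : ℕ) (g : Matrix (Fin n) (Fin n) ℝ) (A : Set (Euc n)) : Set (Euc n) :=
  (Matrix.toEuclideanLin g) '' A

/-- The closed Euclidean unit ball `𝔹ⁿ`. -/
def unitBall (n : ℕ) : Set (Euc n) := Metric.closedBall 0 1

/-- `J(n)`: the bodies `A ∈ 𝓑(n)` for which `𝔹ⁿ` is the maximal-volume ellipsoid
contained in `A`, i.e. `𝔹ⁿ ⊆ A` and `|det g| ≤ 1` for every `g ∈ GL(n,ℝ)` with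
`g𝔹ⁿ ⊆ A`. -/
def Jset (n : ℕ) : Set (Body n) :=
  {A | unitBall n ⊆ A.toSet ∧
       ∀ g : GL (Fin n) ℝ,
         matImage n (g : Matrix (Fin n) (Fin n) ℝ) (unitBall n) ⊆ A.toSet →
         |(g : Matrix (Fin n) (Fin n) ℝ).det| ≤ 1}

/-- `L(n)`: the bodies `A ∈ 𝓑(n)` for which `𝔹ⁿ` is the minimal-volume ellipsoid
containing `A`, i.e. `A ⊆ 𝔹ⁿ` and `|det g| ≥ 1` for every `g ∈ GL(n,ℝ)` with
`A ⊆ g𝔹ⁿ`. -/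
def Lset (n : ℕ) : Set (Body n) :=
  {A | A.toSet ⊆ unitBall n ∧
       ∀ g : GL (Fin n) ℝ,
         A.toSet ⊆ matImage n (g : Matrix (Fin n) (Fin n) ℝ) (unitBall n) →
         1 ≤ |(g : Matrix (Fin n) (Fin n) ℝ).det|}

/-!
The compact subsets of the unit ball form a compact space for the Hausdorff metric, and convexity,
central symmetry and volume-minimality of the ball are closed conditions: an ellipsoid of volume
less than that of the ball that contains `K` can be enlarged slightly, and then it contains every
compact set close to `K`. The nonempty interior, which is not a closed condition, comes for free: if
`K` lay in a hyperplane through the origin, the ball could be shrunk transversally to it without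
losing any point of `K`.
-/

instance nonemptyCompacts_orderClosedTopology {X : Type*} [TopologicalSpace X] [T2Space X] :
    OrderClosedTopology (NonemptyCompacts X) where
  isClosed_le' := by
    have hsup : Continuous fun p : NonemptyCompacts X × NonemptyCompacts X ↦ p.1 ⊔ p.2 :=
      continuous_sup
    simpa only [sup_eq_right] using isClosed_eq hsup continuous_snd

lemma isClosed_setOf_image2_subset {X : Type*} [TopologicalSpace X] [T2Space X] {f : X → X → X}
    (hf : Continuous f.uncurry) :
    IsClosed {K : NonemptyCompacts X | Set.image2 f K K ⊆ (K : Set X)} := by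
  have hprod : Continuous fun K : NonemptyCompacts X ↦ K ×ˢ K :=
    NonemptyCompacts.continuous_prod.comp (continuous_id.prodMk continuous_id)
  simpa only [← SetLike.coe_subset_coe, Function.comp_apply, id, NonemptyCompacts.coe_map,
    NonemptyCompacts.coe_prod, Set.image_uncurry_prod] using
    isClosed_le (hf.nonemptyCompacts_map.comp hprod) continuous_id

lemma isClosed_setOf_convex (𝕜 E : Type*) [Semiring 𝕜] [PartialOrder 𝕜] [AddCommMonoid E]
    [SMul 𝕜 E] [TopologicalSpace E] [T2Space E] [ContinuousAdd E] [ContinuousConstSMul 𝕜 E] :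
    IsClosed {K : NonemptyCompacts E | Convex 𝕜 (K : Set E)} := by
  simp only [convex_iff_pointwise_add_subset, ← Set.image_smul, ← Set.image2_add,
    Set.image2_image_left, Set.image2_image_right, Set.ofPred_forall]
  refine isClosed_iInter fun a ↦ isClosed_iInter fun b ↦ isClosed_iInter fun _ ↦
    isClosed_iInter fun _ ↦ isClosed_iInter fun _ ↦ isClosed_setOf_image2_subset ?_
  exact (continuous_fst.const_smul a).add (continuous_snd.const_smul b)

lemma isClosed_setOf_eq_neg (E : Type*) [InvolutiveNeg E] [TopologicalSpace E] [T2Space E]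
    [ContinuousNeg E] : IsClosed {K : NonemptyCompacts E | (K : Set E) = -(K : Set E)} := by
  have hneg : Continuous (Neg.neg : E → E) := continuous_neg
  simpa only [← SetLike.coe_set_eq, NonemptyCompacts.coe_map, Set.image_neg_eq_neg, id] using
    isClosed_eq continuous_id hneg.nonemptyCompacts_map

lemma exists_linearEquiv_fixing_submodule_det_eq {𝕜 V : Type*} [Field 𝕜] [AddCommGroup V]
    [Module 𝕜 V] [FiniteDimensional 𝕜 V] {p : Submodule 𝕜 V} (hp : p ≠ ⊤) {a : 𝕜} (ha : a ≠ 0) :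
    ∃ g : V ≃ₗ[𝕜] V, (∀ x ∈ p, g x = x) ∧ LinearMap.det (g : V →ₗ[𝕜] V) = a := by
  obtain ⟨v, -, hv⟩ := SetLike.exists_of_lt hp.lt_top
  obtain ⟨f, hfv, hpf⟩ := Submodule.exists_le_ker_of_notMem hv
  let T := LinearMap.transvection f (((a - 1) / f v) • v)
  have hdet : LinearMap.det T = a := by
    rw [LinearMap.transvection.det, map_smul, smul_eq_mul, div_mul_cancel₀ _ hfv,
      add_sub_cancel]
  refine ⟨T.equivOfDetNeZero (hdet ▸ ha), fun x hx ↦ ?_, hdet⟩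
  change x + f x • _ = x
  rw [LinearMap.mem_ker.1 (hpf hx), zero_smul, add_zero]

lemma exists_one_lt_pow_mul_lt {a b : ℝ} (hab : a < b) (d : ℕ) :
    ∃ c : ℝ, 1 < c ∧ c ^ d * a < b := by
  have hcont : ContinuousAt (fun c : ℝ ↦ c ^ d * a) 1 := by fun_prop
  have hlt : ∀ᶠ c in nhds (1 : ℝ), c ^ d * a < b :=
    hcont.eventually_lt_const (by simpa only [one_pow, one_mul] using hab)
  exact ((eventually_mem_nhdsWithin (s := Set.Ioi 1)).and
    (hlt.filter_mono nhdsWithin_le_nhds)).exists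

lemma zero_mem_of_convex_of_eq_neg {V : Type*} [AddCommGroup V] [Module ℝ V] {s : Set V}
    (hne : s.Nonempty) (hconv : Convex ℝ s) (hsymm : s = -s) : (0 : V) ∈ s :=
  ((balanced_iff_neg_mem hconv).2 fun _ hx ↦ Set.mem_neg.1 (hsymm ▸ hx)).zero_mem hne

lemma interior_nonempty_of_span_eq_top {E : Type*} [NormedAddCommGroup E]
    [NormedSpace ℝ E] [FiniteDimensional ℝ E] {s : Set E} (hconv : Convex ℝ s) (h0 : 0 ∈ s)
    (hspan : Submodule.span ℝ s = ⊤) : (interior s).Nonempty := by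
  rw [hconv.interior_nonempty_iff_affineSpan_eq_top, ← Set.insert_eq_of_mem h0,
    ← AffineSubspace.coe_eq_univ_iff, affineSpan_insert_zero, hspan, Submodule.top_coe]

section VolumeMinimal

variable {E : Type*} [NormedAddCommGroup E] [NormedSpace ℝ E]

/-- The unit ball of `E` has the least volume among its linear images containing `s`. That the
ball itself contains `s` is not part of the definition. The volume of `g '' closedBall 0 1` relative
to that of the ball is encoded as `|det g|`, so that no Haar measure has to be chosen; in a
Euclidean space the linear images of the ball are the ellipsoids. -/
def UnitBallVolumeMinimal (s : Set E) : Prop :=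
  ∀ g : E ≃ₗ[ℝ] E, s ⊆ g '' Metric.closedBall 0 1 → 1 ≤ |LinearMap.det (g : E →ₗ[ℝ] E)|

lemma image_smulOfNeZero_trans_ball (g : E ≃ₗ[ℝ] E) {c : ℝ} (hc : 0 < c) :
    (LinearEquiv.smulOfNeZero ℝ E c hc.ne' ≪≫ₗ g) '' Metric.ball 0 1 = g '' Metric.ball 0 c := by
  rw [← smul_unitBall_of_pos hc, ← Set.image_smul, Set.image_image]
  rfl

lemma abs_det_smulOfNeZero_trans (g : E ≃ₗ[ℝ] E) {c : ℝ} (hc : 0 < c) :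
    |LinearMap.det (LinearEquiv.smulOfNeZero ℝ E c hc.ne' ≪≫ₗ g : E →ₗ[ℝ] E)| =
      c ^ Module.finrank ℝ E * |LinearMap.det (g : E →ₗ[ℝ] E)| := by
  have hcoe : (LinearEquiv.smulOfNeZero ℝ E c hc.ne' ≪≫ₗ g : E →ₗ[ℝ] E) =
      c • (g : E →ₗ[ℝ] E) := LinearMap.ext fun x ↦ map_smul g c x
  rw [hcoe, LinearMap.det_smul, abs_mul, abs_of_pos (pow_pos hc _)]

lemma unitBallVolumeMinimal_iff_not_subset_image_ball {s : Set E} :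
    UnitBallVolumeMinimal s ↔ ∀ g : E ≃ₗ[ℝ] E, |LinearMap.det (g : E →ₗ[ℝ] E)| < 1 →
      ¬s ⊆ g '' Metric.ball 0 1 := by
  refine ⟨fun h g hg hs ↦ hg.not_ge <|
    h g (hs.trans (Set.image_mono Metric.ball_subset_closedBall)), fun h g hs ↦ ?_⟩
  by_contra! hg
  obtain ⟨c, hc, hcg⟩ := exists_one_lt_pow_mul_lt hg (Module.finrank ℝ E)
  have hc0 : 0 < c := one_pos.trans hc
  refine h _ ((abs_det_smulOfNeZero_trans g hc0).trans_lt hcg) ?_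
  rw [image_smulOfNeZero_trans_ball g hc0]
  exact hs.trans (Set.image_mono (Metric.closedBall_subset_ball hc))

variable [FiniteDimensional ℝ E]

variable (E) in
lemma isClosed_setOf_unitBallVolumeMinimal :
    IsClosed {K : NonemptyCompacts E | UnitBallVolumeMinimal (K : Set E)} := by
  simp only [unitBallVolumeMinimal_iff_not_subset_image_ball, Set.ofPred_forall]
  refine isClosed_iInter fun g ↦ isClosed_iInter fun _ ↦ IsOpen.isClosed_compl ?_
  have hopen : IsOpen (g '' Metric.ball 0 1) :=
    g.toContinuousLinearEquiv.toHomeomorph.isOpenMap _ Metric.isOpen_ball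
  exact NonemptyCompacts.isOpen_subsets_of_isOpen hopen

lemma UnitBallVolumeMinimal.span_eq_top {s : Set E} (h : UnitBallVolumeMinimal s)
    (hs : s ⊆ Metric.closedBall 0 1) : Submodule.span ℝ s = ⊤ := by
  by_contra hspan
  obtain ⟨g, hfix, hdet⟩ :=
    exists_linearEquiv_fixing_submodule_det_eq hspan (a := (1 / 2 : ℝ)) (by norm_num)
  have hsub : s ⊆ g '' Metric.closedBall 0 1 := fun x hx ↦
    ⟨x, hs hx, hfix x (Submodule.subset_span hx)⟩
  have := h g hsub
  norm_num [hdet] at this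

lemma UnitBallVolumeMinimal.interior_nonempty {s : Set E} (h : UnitBallVolumeMinimal s)
    (hs : s ⊆ Metric.closedBall 0 1) (hne : s.Nonempty) (hconv : Convex ℝ s) (hsymm : s = -s) :
    (interior s).Nonempty :=
  interior_nonempty_of_span_eq_top hconv (zero_mem_of_convex_of_eq_neg hne hconv hsymm)
    (h.span_eq_top hs)

end VolumeMinimal

theorem Lset_isCompact_general (E : Type*) [NormedAddCommGroup E] [NormedSpace ℝ E]
    [FiniteDimensional ℝ E] :
    IsCompact {K : NonemptyCompacts E |
      (Convex ℝ (K : Set E) ∧ (interior (K : Set E)).Nonempty ∧ (K : Set E) = -(K : Set E)) ∧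
        (K : Set E) ⊆ Metric.closedBall 0 1 ∧ UnitBallVolumeMinimal (K : Set E)} := by
  have hball : IsCompact {K : NonemptyCompacts E | (K : Set E) ⊆ Metric.closedBall 0 1} :=
    NonemptyCompacts.isCompact_subsets_of_isCompact (isCompact_closedBall 0 1)
  convert! hball.inter_right <| (isClosed_setOf_convex ℝ E).inter <|
    (isClosed_setOf_eq_neg E).inter (isClosed_setOf_unitBallVolumeMinimal E) using 1
  ext K
  constructor
  · rintro ⟨⟨hconv, -, hsymm⟩, hsub, hmin⟩
    exact ⟨hsub, hconv, hsymm, hmin⟩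
  · rintro ⟨hsub, hconv, hsymm, hmin⟩
    exact ⟨⟨hconv, hmin.interior_nonempty hsub K.nonempty hconv hsymm, hsymm⟩, hsub, hmin⟩

lemma unitBallVolumeMinimal_iff_forall_GL {n : ℕ} {s : Set (Euc n)} :
    UnitBallVolumeMinimal s ↔ ∀ g : GL (Fin n) ℝ,
      s ⊆ matImage n (g : Matrix (Fin n) (Fin n) ℝ) (unitBall n) →
      1 ≤ |(g : Matrix (Fin n) (Fin n) ℝ).det| := by
  let e : GL (Fin n) ℝ ≃* (Euc n ≃ₗ[ℝ] Euc n) :=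
    (Units.mapEquiv (Matrix.toLpLinAlgEquiv 2).toMulEquiv).trans
      (LinearMap.GeneralLinearGroup.generalLinearEquiv ℝ (Euc n))
  have hdet (g : GL (Fin n) ℝ) :
      LinearMap.det (e g : Euc n →ₗ[ℝ] Euc n) = (g : Matrix (Fin n) (Fin n) ℝ).det :=
    LinearMap.det_toLpLin 2 _
  refine (e.toEquiv.forall_congr fun {g} ↦ ?_).symm
  rw [← hdet]
  rfl

lemma coe_image_Lset (n : ℕ) :
    ((↑) : Body n → NonemptyCompacts (Euc n)) '' Lset n =
      {K | K ∈ BodySet n ∧ (K : Set (Euc n)) ⊆ Metric.closedBall 0 1 ∧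
        UnitBallVolumeMinimal (K : Set (Euc n))} := by
  ext K
  simp only [unitBallVolumeMinimal_iff_forall_GL]
  constructor
  · rintro ⟨A, hA, rfl⟩
    exact ⟨A.2, hA⟩
  · rintro ⟨hK, hL⟩
    exact ⟨⟨K, hK⟩, hL, rfl⟩

/-- `L(n)` is a compact subset of `𝓑(n)` with respect to the
Hausdorff metric. -/
theorem Lset_isCompact (n : ℕ) : IsCompact (Lset n) :=
  Subtype.isCompact_iff.2 (coe_image_Lset n ▸ Lset_isCompact_general (Euc n))

end
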